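/- For every natural number n ≥ 39 and every admissible multiplicity function m, the graph G(n,m) ∈ 𝒞(A_n) admits no minimal sum labeling: there is no function ℓ : V → ℕ with ℓ(v) ≥ 1 for all v ∈ V, satisfying that for all distinct u, v ∈ V, u and v are adjacent in G(n,m) if and only if there exists w ∈ V with ℓ(u)+ℓ(v) = ℓ(w), and such that ℓ(u) = 1 for some u ∈ V. -/

import Mathlib

/-- `Sn n = {2,3,…,n} ∪ {n+2}`. -/
def Sn (n : ℕ) : Set ℕ := {k | (2 ≤ k ∧ k ≤ n) ∨ k = n + 2}

/-- `m` is an admissible multiplicity function for `Sn n`. -/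
def Admissible (n : ℕ) (m : ℕ → ℕ) : Prop :=
  (∀ i ∈ Sn n, 2 * i ∈ Sn n → 2 ≤ m i) ∧
  (∀ i ∈ Sn n, 2 * i ∉ Sn n → m i = 1) ∧
  (∀ i, i ∉ Sn n → m i = 0)

/-- The vertex set of `G(n,m)`: pairs `(i,j)` with `i ∈ Sn n` and `j < m i`. -/
def Vnm (n : ℕ) (m : ℕ → ℕ) : Set (ℕ × ℕ) := {p | p.1 ∈ Sn n ∧ p.2 < m p.1}

/-- Distinct vertices `u`, `v` of `G(n,m)` are adjacent iff `u.1 + v.1 ∈ Sn n`. -/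
def AdjG (n : ℕ) (u v : ℕ × ℕ) : Prop := u ≠ v ∧ u.1 + v.1 ∈ Sn n

/-- `psi m i` is the set of vertices induced by the integer `i`. -/
def psi (m : ℕ → ℕ) (i : ℕ) : Set (ℕ × ℕ) := {p | p.1 = i ∧ p.2 < m i}

/-- The set of proper terminals of a vertex `v` of `G(n,m)`. -/
def tau (n : ℕ) (m : ℕ → ℕ) (v : ℕ × ℕ) : Set (ℕ × ℕ) :=
  {w ∈ Vnm n m | w ≠ v ∧ v.1 + w.1 ∉ Sn n}

/-- A (possibly non-injective) sum labeling of the graph `G(n,m)`. -/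
def IsSumLabelingG (n : ℕ) (m : ℕ → ℕ) (ℓ : ℕ × ℕ → ℕ) : Prop :=
  (∀ v ∈ Vnm n m, 1 ≤ ℓ v) ∧
  ∀ u ∈ Vnm n m, ∀ v ∈ Vnm n m, u ≠ v →
    (AdjG n u v ↔ ∃ w ∈ Vnm n m, ℓ u + ℓ v = ℓ w)

/-!
Let `D` be the set of labels and suppose that `1 ∈ D`. Adding a label `a` of the class `2` leads
out of `D` only from the labels `x` and `M` of the classes `n - 1` and `n + 2` (and perhaps from
`a` itself); adding a label `b` of the class `3` does so only from the labels `q`, `p` and `M` of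
the classes `n - 2`, `n` and `n + 2` (and perhaps from `b` itself). Since a step by `a` or `b` is
possible everywhere except at `M`, all labels agree modulo `gcd a b`, so `a` and `b` are coprime.
Climbing in steps of `b` shows that `D` meets at most three residue classes modulo `b`, whereas a
large set that is almost closed under adding `a` contains a long progression of difference `a`;
hence `b ≤ 3`, and likewise `a ≤ 2`. For both values of `a` this pins `D` down near its maximum:
`M = x + 3` and `p = M - a`, after which no value is left for `q`.
-/

section Translation

variable {D S T : Finset ℕ} {a b g : ℕ}

theorem exists_ge_modEq_of_forall_exists_gt
    (h : ∀ z ∈ D, (∃ w ∈ D, z < w ∧ w ≡ z [MOD g]) ∨ z ∈ T) {z : ℕ} (hz : z ∈ D) :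
    ∃ t ∈ T, z ≤ t ∧ t ≡ z [MOD g] := by
  obtain ⟨t, ht, hmax⟩ := {w ∈ D | w ≡ z [MOD g]}.exists_max_image id
    ⟨z, Finset.mem_filter.2 ⟨hz, rfl⟩⟩
  simp only [Finset.mem_filter, id, and_imp] at ht hmax
  refine ⟨t, (h t ht.1).resolve_left ?_, hmax z hz rfl, ht.2⟩
  rintro ⟨w, hw, htw, hmod⟩
  exact htw.not_ge (hmax w hw (hmod.trans ht.2))

theorem exists_ge_modEq_of_forall_add_mem (ha : 0 < a) (h : ∀ z ∈ D, z + a ∈ D ∨ z ∈ T) {z : ℕ}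
    (hz : z ∈ D) : ∃ t ∈ T, z ≤ t ∧ t ≡ z [MOD a] :=
  exists_ge_modEq_of_forall_exists_gt
    (fun w hw => (h w hw).imp_left fun hwa => ⟨w + a, hwa, by omega, by simp [Nat.ModEq]⟩) hz

theorem mem_of_modEq_of_forall_add_mem {u t z : ℕ} (hu : u ∈ D)
    (h : ∀ w ∈ D, u ≤ w → w < t → w ≡ u [MOD a] → w + a ∈ D) (huz : u ≤ z) (hzt : z ≤ t)
    (hmod : z ≡ u [MOD a]) : z ∈ D := by
  obtain ⟨j, hj⟩ := (Nat.modEq_iff_dvd' huz).1 hmod.symm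
  obtain rfl : z = u + a * j := by omega
  clear hj huz hmod
  induction j with
  | zero => simpa using hu
  | succ j ih =>
    rcases Nat.eq_zero_or_pos a with rfl | ha
    · simpa using hu
    rw [Nat.mul_succ, ← add_assoc] at hzt ⊢
    exact h _ (ih (by omega)) (by omega) (by omega) (by simp [Nat.ModEq])

theorem exists_progression (h : ∀ z ∈ D, z + a ∈ D ∨ z ∈ S) {k : ℕ} (hcard : k * S.card < D.card) :
    ∃ z, ∀ j ≤ k, z + j * a ∈ D := by
  let bad := (Finset.range k ×ˢ S).image fun q => q.2 - q.1 * a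
  have hbad : bad.card < D.card := Finset.card_image_le.trans_lt (by simpa using hcard)
  obtain ⟨z, hz, hz_bad⟩ := Finset.exists_mem_notMem_of_card_lt_card hbad
  refine ⟨z, fun j hj => ?_⟩
  induction j with
  | zero => simpa using hz
  | succ j ih =>
    rw [Nat.succ_mul, ← add_assoc]
    refine (h _ (ih (by omega))).resolve_right fun hS => hz_bad ?_
    exact Finset.mem_image.2 ⟨(j, z + j * a), by simp [hS, Nat.lt_of_succ_le hj], by simp⟩

theorem le_card_of_progression (hba : Nat.Coprime b a)
    (hmod : ∀ z ∈ D, ∃ t ∈ T, t ≡ z [MOD b]) {z : ℕ} (hz : ∀ j ≤ T.card, z + j * a ∈ D) :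
    b ≤ T.card := by
  by_contra! hlt
  have hmaps : Set.MapsTo (fun j => (z + j * a) % b) (Finset.range (T.card + 1))
      (T.image (· % b)) := fun j hj => by
    obtain ⟨t, ht, htj⟩ := hmod _ (hz j (Finset.mem_range_succ_iff.1 hj))
    exact Finset.mem_image.2 ⟨t, ht, htj⟩
  have hinj : Set.InjOn (fun j => (z + j * a) % b) (Finset.range (T.card + 1)) :=
    fun i hi j hj hij => by
      have hmul : i * a ≡ j * a [MOD b] := Nat.ModEq.add_left_cancel' z hij
      have hi' := Finset.mem_range_succ_iff.1 hi
      have hj' := Finset.mem_range_succ_iff.1 hj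
      exact (Nat.ModEq.cancel_right_of_coprime hba hmul).eq_of_lt_of_lt (by omega) (by omega)
  have hle := (Finset.card_le_card_of_injOn _ hmaps hinj).trans Finset.card_image_le
  rw [Finset.card_range] at hle
  omega

theorem le_card_of_forall_add_mem (hpos : ∀ z ∈ D, 0 < z) (hb : 0 < b)
    (hba : Nat.Coprime b a) (hS : ∀ z ∈ D, z ≠ a → z + a ∈ D ∨ z ∈ S)
    (hT : ∀ z ∈ D, z ≠ b → z + b ∈ D ∨ z ∈ T) (hcard : T.card * (S.card + 1) + 2 < D.card) :
    b ≤ T.card := by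
  have hmod : ∀ z ∈ D \ {a, b}, ∃ t ∈ T, t ≡ z [MOD b] := fun z hz => by
    have hT' : ∀ w ∈ D.erase b, w + b ∈ D.erase b ∨ w ∈ T := fun w hw => by
      simp only [Finset.mem_erase] at hw ⊢
      have := hpos w hw.2
      exact (hT w hw.2 hw.1).imp_left fun hwb => ⟨by omega, hwb⟩
    simp only [Finset.mem_sdiff, Finset.mem_insert, Finset.mem_singleton, not_or] at hz
    obtain ⟨t, ht, -, htz⟩ :=
      exists_ge_modEq_of_forall_add_mem hb hT' (Finset.mem_erase.2 ⟨hz.2.2, hz.1⟩)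
    exact ⟨t, ht, htz⟩
  -- Deleting `b` can create one new exit: the point from which a step by `a` leads to `b`.
  have hS' : ∀ z ∈ D \ {a, b}, z + a ∈ D \ {a, b} ∨ z ∈ insert (b - a) S := fun z hz => by
    simp only [Finset.mem_sdiff, Finset.mem_insert, Finset.mem_singleton] at hz ⊢
    have := hpos z hz.1
    have := hS z hz.1 (by tauto)
    grind
  have hcard' : T.card * (insert (b - a) S).card < (D \ {a, b}).card := by
    have hpair : ({a, b} : Finset ℕ).card ≤ 2 := Finset.card_le_two
    have hsdiff := Finset.le_card_sdiff {a, b} D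
    have hmul := Nat.mul_le_mul_left T.card (Finset.card_insert_le (b - a) S)
    omega
  obtain ⟨z, hz⟩ := exists_progression hS' hcard'
  exact le_card_of_progression hba hmod hz

end Translation

theorem mem_Sn {n k : ℕ} : k ∈ Sn n ↔ (2 ≤ k ∧ k ≤ n) ∨ k = n + 2 := Iff.rfl

/-- The sum labelings of the graphs `G(n,m)` as seen by the set `D` of their labels: every label `z`
belongs to a class `c z ∈ Sn n`, the first coordinate of the vertices it labels, and `r k` is a
chosen label of the class `k`. The function `c` has no meaning outside `D`, and `r` none outside
`Sn n`. Equal labels of different vertices are merged, so the multiplicities enter only through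
`exists_add_mem`, where `w = z` is possible. -/
structure IsLabelClassification (n : ℕ) (D : Finset ℕ) (c r : ℕ → ℕ) : Prop where
  pos : ∀ z ∈ D, 0 < z
  class_mem : ∀ z ∈ D, c z ∈ Sn n
  rep_mem : ∀ k ∈ Sn n, r k ∈ D
  class_rep : ∀ k ∈ Sn n, c (r k) = k
  eq_of_class_eq : ∀ z ∈ D, ∀ w ∈ D, c z = c w → 2 * c z ∉ Sn n → z = w
  add_mem_iff : ∀ z ∈ D, ∀ w ∈ D, z ≠ w → (z + w ∈ D ↔ c z + c w ∈ Sn n)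
  exists_add_mem : ∀ z ∈ D, ∀ k ∈ Sn n, c z + k ∈ Sn n → ∃ w ∈ D, c w = k ∧ z + w ∈ D

namespace IsLabelClassification

variable {n : ℕ} {D : Finset ℕ} {c r : ℕ → ℕ} {a b z w : ℕ}

theorem eq_rep_iff (h : IsLabelClassification n D c r) {k : ℕ} (hk : k ∈ Sn n)
    (h2k : n + 2 < 2 * k) (hz : z ∈ D) : z = r k ↔ c z = k := by
  refine ⟨fun hzk => hzk ▸ h.class_rep k hk, fun hzk => ?_⟩
  refine h.eq_of_class_eq z hz _ (h.rep_mem k hk) (hzk.trans (h.class_rep k hk).symm) ?_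
  rw [mem_Sn]
  omega

theorem card_ge (h : IsLabelClassification n D c r) : n ≤ D.card := by
  let s := insert (n + 2) (Finset.Icc 2 n)
  have hs : ∀ k ∈ s, k ∈ Sn n := fun k hk => by
    simp only [s, Finset.mem_insert, Finset.mem_Icc] at hk
    exact hk.symm
  calc
    n ≤ s.card := by
      rw [Finset.card_insert_of_notMem (by simp), Nat.card_Icc]
      omega
    _ ≤ D.card := Finset.card_le_card_of_injOn r (fun k hk => h.rep_mem k (hs k hk))
      (Set.LeftInvOn.injOn fun k hk => h.class_rep k (hs k hk))

theorem le_rep_add_two (h : IsLabelClassification n D c r) (hz : z ∈ D) : z ≤ r (n + 2) := by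
  obtain ⟨t, ht, hmax⟩ := D.exists_max_image id ⟨z, hz⟩
  have hct : c t = n + 2 := by
    by_contra hne
    have hmem := h.class_mem t ht
    rw [mem_Sn] at hmem
    obtain ⟨w, hw, -, htw⟩ := h.exists_add_mem t ht (n + 2 - c t)
      (mem_Sn.2 (by omega)) (mem_Sn.2 (by omega))
    have := h.pos w hw
    have : t + w ≤ t := hmax _ htw
    omega
  exact (h.eq_rep_iff (mem_Sn.2 (by omega)) (by omega) ht).2 hct ▸ hmax z hz

theorem le_rep_add_two_self (h : IsLabelClassification n D c r) : n ≤ r (n + 2) := by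
  have hsub : D ⊆ Finset.Icc 1 (r (n + 2)) := fun z hz =>
    Finset.mem_Icc.2 ⟨h.pos z hz, h.le_rep_add_two hz⟩
  simpa using h.card_ge.trans (Finset.card_le_card hsub)

theorem add_mem_iff_of_class_eq_two_of_ne (h : IsLabelClassification n D c r) (hn : 5 ≤ n)
    (ha : a ∈ D) (hca : c a = 2) (hz : z ∈ D) (hza : z ≠ a) :
    z + a ∈ D ↔ z ≠ r (n - 1) ∧ z ≠ r (n + 2) := by
  have hcz := h.class_mem z hz
  rw [h.add_mem_iff z hz a ha hza, hca, Ne, Ne,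
    h.eq_rep_iff (k := n - 1) (mem_Sn.2 (by omega)) (by omega) hz,
    h.eq_rep_iff (k := n + 2) (mem_Sn.2 (by omega)) (by omega) hz]
  simp only [mem_Sn] at hcz ⊢
  omega

theorem add_mem_iff_of_class_eq_three_of_ne (h : IsLabelClassification n D c r) (hn : 7 ≤ n)
    (hb : b ∈ D) (hcb : c b = 3) (hz : z ∈ D) (hzb : z ≠ b) :
    z + b ∈ D ↔ z ≠ r (n - 2) ∧ z ≠ r n ∧ z ≠ r (n + 2) := by
  have hcz := h.class_mem z hz
  rw [h.add_mem_iff z hz b hb hzb, hcb, Ne, Ne, Ne,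
    h.eq_rep_iff (k := n - 2) (mem_Sn.2 (by omega)) (by omega) hz,
    h.eq_rep_iff (k := n) (mem_Sn.2 (by omega)) (by omega) hz,
    h.eq_rep_iff (k := n + 2) (mem_Sn.2 (by omega)) (by omega) hz]
  simp only [mem_Sn] at hcz ⊢
  omega

theorem add_rep_sub_one_mem_iff (h : IsLabelClassification n D c r) (hn : 3 ≤ n) (hz : z ∈ D)
    (hzx : z ≠ r (n - 1)) : z + r (n - 1) ∈ D ↔ c z = 3 := by
  have hx : n - 1 ∈ Sn n := mem_Sn.2 (by omega)
  have hcz := h.class_mem z hz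
  rw [h.add_mem_iff z hz _ (h.rep_mem _ hx) hzx, h.class_rep _ hx]
  simp only [mem_Sn] at hcz ⊢
  omega

theorem add_rep_self_mem_iff (h : IsLabelClassification n D c r) (hn : 2 ≤ n) (hz : z ∈ D)
    (hzp : z ≠ r n) : z + r n ∈ D ↔ c z = 2 := by
  have hp : n ∈ Sn n := mem_Sn.2 (by omega)
  have hcz := h.class_mem z hz
  rw [h.add_mem_iff z hz _ (h.rep_mem _ hp) hzp, h.class_rep _ hp]
  simp only [mem_Sn] at hcz ⊢
  omega

theorem rep_ne_of_class_ne (h : IsLabelClassification n D c r) {k : ℕ} (hk : k ∈ Sn n)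
    (hne : c z ≠ k) : z ≠ r k := fun hz => hne (hz ▸ h.class_rep k hk)

theorem coprime (h : IsLabelClassification n D c r) (hn : 7 ≤ n) (h1 : 1 ∈ D) (ha : a ∈ D)
    (hca : c a = 2) (hb : b ∈ D) (hcb : c b = 3) : Nat.Coprime a b := by
  have hstep : ∀ z ∈ D, (∃ w ∈ D, z < w ∧ w ≡ z [MOD a.gcd b]) ∨ z ∈ ({r (n + 2)} : Finset ℕ) := by
    intro z hz
    rw [Finset.mem_singleton, or_iff_not_imp_right]
    intro hzM
    have hstep_a (hza : z + a ∈ D) : ∃ w ∈ D, z < w ∧ w ≡ z [MOD a.gcd b] :=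
      ⟨z + a, hza, by have := h.pos a ha; omega,
        Nat.ModEq.add_left z (Nat.modEq_zero_iff_dvd.2 (Nat.gcd_dvd_left a b))⟩
    have hstep_b (hzb : z + b ∈ D) : ∃ w ∈ D, z < w ∧ w ≡ z [MOD a.gcd b] :=
      ⟨z + b, hzb, by have := h.pos b hb; omega,
        Nat.ModEq.add_left z (Nat.modEq_zero_iff_dvd.2 (Nat.gcd_dvd_right a b))⟩
    by_cases hcz : c z = 2 ∨ c z = n - 1
    · refine hstep_b ((h.add_mem_iff_of_class_eq_three_of_ne hn hb hcb hz ?_).2 ⟨?_, ?_, hzM⟩)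
      · exact ne_of_apply_ne c (by omega)
      · exact h.rep_ne_of_class_ne (mem_Sn.2 (by omega)) (by omega)
      · exact h.rep_ne_of_class_ne (mem_Sn.2 (by omega)) (by omega)
    · refine hstep_a ((h.add_mem_iff_of_class_eq_two_of_ne (by omega) ha hca hz ?_).2 ⟨?_, hzM⟩)
      · exact ne_of_apply_ne c (by omega)
      · exact h.rep_ne_of_class_ne (mem_Sn.2 (by omega)) (by omega)
  have hmod {z} (hz : z ∈ D) : r (n + 2) ≡ z [MOD a.gcd b] := by
    obtain ⟨t, ht, -, htz⟩ := exists_ge_modEq_of_forall_exists_gt hstep hz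
    exact Finset.mem_singleton.1 ht ▸ htz
  have h10 : 1 ≡ 0 [MOD a.gcd b] :=
    ((hmod h1).symm.trans (hmod ha)).trans (Nat.modEq_zero_iff_dvd.2 (Nat.gcd_dvd_left a b))
  exact Nat.dvd_one.1 (Nat.modEq_zero_iff_dvd.1 h10)

theorem le_two_and_le_three (h : IsLabelClassification n D c r) (hn : 12 ≤ n) (h1 : 1 ∈ D)
    (ha : a ∈ D) (hca : c a = 2) (hb : b ∈ D) (hcb : c b = 3) : a ≤ 2 ∧ b ≤ 3 := by
  have hcop := h.coprime (by omega) h1 ha hca hb hcb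
  have hS : ∀ z ∈ D, z ≠ a → z + a ∈ D ∨ z ∈ ({r (n - 1), r (n + 2)} : Finset ℕ) :=
    fun z hz hza => by
      have := h.add_mem_iff_of_class_eq_two_of_ne (by omega) ha hca hz hza
      simp only [Finset.mem_insert, Finset.mem_singleton]
      tauto
  have hT : ∀ z ∈ D, z ≠ b → z + b ∈ D ∨ z ∈ ({r (n - 2), r n, r (n + 2)} : Finset ℕ) :=
    fun z hz hzb => by
      have := h.add_mem_iff_of_class_eq_three_of_ne (by omega) hb hcb hz hzb
      simp only [Finset.mem_insert, Finset.mem_singleton]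
      tauto
  have hScard : ({r (n - 1), r (n + 2)} : Finset ℕ).card ≤ 2 := Finset.card_le_two
  have hTcard : ({r (n - 2), r n, r (n + 2)} : Finset ℕ).card ≤ 3 := Finset.card_le_three
  have hD := h.card_ge
  constructor
  · refine (le_card_of_forall_add_mem h.pos (h.pos a ha) hcop hT hS ?_).trans hScard
    have := Nat.mul_le_mul hScard (Nat.add_le_add_right hTcard 1)
    omega
  · refine (le_card_of_forall_add_mem h.pos (h.pos b hb) hcop.symm hS hT ?_).trans hTcard
    have := Nat.mul_le_mul hTcard (Nat.add_le_add_right hScard 1)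
    omega

theorem le_two_of_class_eq_two (h : IsLabelClassification n D c r) (hn : 12 ≤ n) (h1 : 1 ∈ D)
    (ha : a ∈ D) (hca : c a = 2) : a ≤ 2 := by
  have h3 : 3 ∈ Sn n := mem_Sn.2 (by omega)
  exact (h.le_two_and_le_three hn h1 ha hca (h.rep_mem 3 h3) (h.class_rep 3 h3)).1

theorem le_three_of_class_eq_three (h : IsLabelClassification n D c r) (hn : 12 ≤ n) (h1 : 1 ∈ D)
    (hb : b ∈ D) (hcb : c b = 3) : b ≤ 3 := by
  have h2 : 2 ∈ Sn n := mem_Sn.2 (by omega)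
  exact (h.le_two_and_le_three hn h1 (h.rep_mem 2 h2) (h.class_rep 2 h2) hb hcb).2

theorem class_two_ne_two_of_class_one_eq_two (h : IsLabelClassification n D c r) (hn : 5 ≤ n)
    (h1 : 1 ∈ D) (h2 : 2 ∈ D) (hc1 : c 1 = 2) : c 2 ≠ 2 := by
  intro hc2
  have h3 : 3 ∈ Sn n := mem_Sn.2 (by omega)
  have hx := h.rep_mem (n - 1) (mem_Sn.2 (by omega))
  have hx1 := h.rep_ne_of_class_ne (k := n - 1) (mem_Sn.2 (by omega)) (by omega : c 1 ≠ n - 1)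
  obtain ⟨z, hz, hmax⟩ := {z ∈ D | z ≠ 1 ∧ z ≠ 2 ∧ z ≠ r (n - 1) ∧ z ≠ r (n + 2)}.exists_max_image
    id ⟨r 3, by
      have hc3 := h.class_rep 3 h3
      exact Finset.mem_filter.2 ⟨h.rep_mem 3 h3, ne_of_apply_ne c (by omega),
        ne_of_apply_ne c (by omega), h.rep_ne_of_class_ne (mem_Sn.2 (by omega)) (by omega),
        h.rep_ne_of_class_ne (mem_Sn.2 (by omega)) (by omega)⟩⟩
  simp only [Finset.mem_filter, id, and_imp] at hz hmax
  obtain ⟨hzD, hz1, hz2, hzx, hzM⟩ := hz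
  have := h.pos z hzD
  have hz1D := (h.add_mem_iff_of_class_eq_two_of_ne hn h1 hc1 hzD hz1).2 ⟨hzx, hzM⟩
  have hz2D := (h.add_mem_iff_of_class_eq_two_of_ne hn h2 hc2 hzD hz2).2 ⟨hzx, hzM⟩
  have hM := h.le_rep_add_two hz2D
  have hmax1 := hmax _ hz1D
  have hx_eq : r (n - 1) = z + 1 := by omega
  have hx_succ : r (n - 1) + 1 ∈ D := by rwa [hx_eq]
  exact ((h.add_mem_iff_of_class_eq_two_of_ne hn h1 hc1 hx hx1.symm).1 hx_succ).1 rfl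

theorem eq_of_class_eq_two (h : IsLabelClassification n D c r) (hn : 12 ≤ n) (h1 : 1 ∈ D)
    (hz : z ∈ D) (hcz : c z = 2) (hw : w ∈ D) (hcw : c w = 2) : z = w := by
  have hz0 := h.pos z hz
  have hw0 := h.pos w hw
  have hz2 := h.le_two_of_class_eq_two hn h1 hz hcz
  have hw2 := h.le_two_of_class_eq_two hn h1 hw hcw
  have hnot := h.class_two_ne_two_of_class_one_eq_two (by omega) h1
  interval_cases z <;> interval_cases w <;> tauto

theorem add_mem_iff_of_class_eq_two (h : IsLabelClassification n D c r) (hn : 12 ≤ n) (h1 : 1 ∈ D)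
    (ha : a ∈ D) (hca : c a = 2) (hz : z ∈ D) :
    z + a ∈ D ↔ z ≠ r (n - 1) ∧ z ≠ r (n + 2) := by
  rcases eq_or_ne z a with rfl | hza
  · obtain ⟨w, hw, hcw, hzw⟩ :=
      h.exists_add_mem z hz 2 (mem_Sn.2 (by omega)) (mem_Sn.2 (by omega))
    rw [h.eq_of_class_eq_two hn h1 hw hcw hz hca] at hzw
    exact iff_of_true hzw ⟨h.rep_ne_of_class_ne (mem_Sn.2 (by omega)) (by omega),
      h.rep_ne_of_class_ne (mem_Sn.2 (by omega)) (by omega)⟩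
  · exact h.add_mem_iff_of_class_eq_two_of_ne (by omega) ha hca hz hza

theorem le_three_of_add_rep_sub_one_mem (h : IsLabelClassification n D c r) (hn : 12 ≤ n)
    (h1 : 1 ∈ D) (hz : z ∈ D) (hzx : z ≠ r (n - 1)) (hmem : z + r (n - 1) ∈ D) : z ≤ 3 :=
  h.le_three_of_class_eq_three hn h1 hz ((h.add_rep_sub_one_mem_iff (by omega) hz hzx).1 hmem)

theorem eq_of_add_rep_self_mem (h : IsLabelClassification n D c r) (hn : 12 ≤ n) (h1 : 1 ∈ D)
    (ha : a ∈ D) (hca : c a = 2) (hz : z ∈ D) (hzp : z ≠ r n) (hmem : z + r n ∈ D) : z = a :=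
  h.eq_of_class_eq_two hn h1 hz ((h.add_rep_self_mem_iff (by omega) hz hzp).1 hmem) ha hca

theorem eq_one_or_eq_two (h : IsLabelClassification n D c r) (hn : 12 ≤ n) (h1 : 1 ∈ D)
    (ha : a ∈ D) (hca : c a = 2) : a = 1 ∨ a = 2 := by
  have := h.pos a ha
  have := h.le_two_of_class_eq_two hn h1 ha hca
  omega

theorem rep_three_eq_or (h : IsLabelClassification n D c r) (hn : 12 ≤ n) (h1 : 1 ∈ D)
    (ha : a ∈ D) (hca : c a = 2) : r 3 = 3 ∨ r 3 + a = 3 := by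
  have h3 : 3 ∈ Sn n := mem_Sn.2 (by omega)
  have hpos := h.pos _ (h.rep_mem 3 h3)
  have hle := h.le_three_of_class_eq_three hn h1 (h.rep_mem 3 h3) (h.class_rep 3 h3)
  have hne := h.rep_ne_of_class_ne h3 (by omega : c a ≠ 3)
  rcases h.eq_one_or_eq_two hn h1 ha hca with rfl | rfl <;> omega

theorem rep_sub_one_lt_rep_add_two (h : IsLabelClassification n D c r) (hn : 3 ≤ n) :
    r (n - 1) < r (n + 2) := by
  have hx : n - 1 ∈ Sn n := mem_Sn.2 (by omega)
  have hcx := h.class_rep _ hx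
  exact (h.le_rep_add_two (h.rep_mem _ hx)).lt_of_ne
    (h.rep_ne_of_class_ne (mem_Sn.2 (by omega)) (by omega))

theorem rep_sub_one_add_notMem (h : IsLabelClassification n D c r) (hn : 12 ≤ n) (h1 : 1 ∈ D)
    (ha : a ∈ D) (hca : c a = 2) : r (n - 1) + a ∉ D := fun hmem =>
  ((h.add_mem_iff_of_class_eq_two hn h1 ha hca
    (h.rep_mem _ (mem_Sn.2 (by omega)))).1 hmem).1 rfl

theorem exists_le_modEq (h : IsLabelClassification n D c r) (hn : 12 ≤ n) (h1 : 1 ∈ D)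
    (ha : a ∈ D) (hca : c a = 2) (hz : 0 < z) : ∃ u ∈ D, u ≤ z ∧ z ≡ u [MOD a] := by
  rcases h.eq_one_or_eq_two hn h1 ha hca with rfl | rfl
  · exact ⟨1, h1, hz, Nat.modEq_one⟩
  · rcases Nat.mod_two_eq_zero_or_one z with hz2 | hz2
    · exact ⟨2, ha, by omega, hz2⟩
    · exact ⟨1, h1, hz, hz2⟩

theorem mem_of_le_rep_sub_one (h : IsLabelClassification n D c r) (hn : 12 ≤ n) (h1 : 1 ∈ D)
    (ha : a ∈ D) (hca : c a = 2) (hz : 0 < z) (hzx : z ≤ r (n - 1)) : z ∈ D := by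
  obtain ⟨u, hu, huz, hmod⟩ := h.exists_le_modEq hn h1 ha hca hz
  have hxM := h.rep_sub_one_lt_rep_add_two (by omega)
  refine mem_of_modEq_of_forall_add_mem hu (fun w hw _ hwx _ => ?_) huz hzx hmod
  exact (h.add_mem_iff_of_class_eq_two hn h1 ha hca hw).2 ⟨hwx.ne, (hwx.trans hxM).ne⟩

theorem rep_three_add_rep_sub_one_mem (h : IsLabelClassification n D c r) (hn : 5 ≤ n) :
    r 3 + r (n - 1) ∈ D := by
  have h3 : 3 ∈ Sn n := mem_Sn.2 (by omega)
  have hc3 := h.class_rep 3 h3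
  exact (h.add_rep_sub_one_mem_iff (by omega) (h.rep_mem 3 h3)
    (h.rep_ne_of_class_ne (mem_Sn.2 (by omega)) (by omega))).2 hc3

theorem rep_sub_one_add_three_mem (h : IsLabelClassification n D c r) (hn : 12 ≤ n) (h1 : 1 ∈ D)
    (ha : a ∈ D) (hca : c a = 2) (hM : r (n - 1) + 3 ≤ r (n + 2)) : r (n - 1) + 3 ∈ D := by
  have hb := h.rep_three_add_rep_sub_one_mem (by omega)
  have hb0 := h.pos _ (h.rep_mem 3 (mem_Sn.2 (by omega)))
  have ha0 := h.pos a ha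
  rcases h.rep_three_eq_or hn h1 ha hca with hb3 | hba
  · rwa [hb3, add_comm] at hb
  · have hmem := (h.add_mem_iff_of_class_eq_two hn h1 ha hca hb).2 ⟨by omega, by omega⟩
    rwa [show r 3 + r (n - 1) + a = r (n - 1) + 3 by omega] at hmem

theorem four_lt_rep_sub_one_of_class_one (h : IsLabelClassification n D c r) (hn : 12 ≤ n)
    (h1 : 1 ∈ D) (hc1 : c 1 = 2) : 4 < r (n - 1) := by
  by_contra! hx4
  have hM := h.le_rep_add_two_self
  have hx3 := h.rep_sub_one_add_three_mem hn h1 h1 hc1 (by omega)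
  have hmem : r (n - 1) + 3 + r (n - 1) ∈ D :=
    mem_of_modEq_of_forall_add_mem (t := r (n + 2)) hx3
      (fun w hw hxw hwM _ => (h.add_mem_iff_of_class_eq_two hn h1 h1 hc1 hw).2
        ⟨by omega, hwM.ne⟩) (by omega) (by omega) Nat.modEq_one
  have hle := h.le_three_of_add_rep_sub_one_mem hn h1 hx3 (by omega) hmem
  have hx0 := h.pos _ (h.rep_mem (n - 1) (mem_Sn.2 (by omega)))
  omega

theorem rep_add_two_modEq (h : IsLabelClassification n D c r) (hn : 12 ≤ n) (h1 : 1 ∈ D)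
    (ha : a ∈ D) (hca : c a = 2) (hz : z ∈ D) (hxz : r (n - 1) < z) :
    r (n + 2) ≡ z [MOD a] := by
  obtain ⟨t, ht, hzt, hmod⟩ := exists_ge_modEq_of_forall_add_mem
    (T := {r (n - 1), r (n + 2)}) (h.pos a ha) (fun w hw => by
      have := h.add_mem_iff_of_class_eq_two hn h1 ha hca hw
      simp only [Finset.mem_insert, Finset.mem_singleton]
      tauto) hz
  simp only [Finset.mem_insert, Finset.mem_singleton] at ht
  rcases ht with rfl | rfl
  · omega
  · exact hmod

theorem rep_three_mod_two (h : IsLabelClassification n D c r) (hn : 12 ≤ n) (h1 : 1 ∈ D)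
    (h2 : 2 ∈ D) (hc2 : c 2 = 2) : r 3 % 2 = 1 := by
  rcases h.rep_three_eq_or hn h1 h2 hc2 with hb | hb <;> omega

theorem mem_of_modEq_rep_add_two (h : IsLabelClassification n D c r) (hn : 12 ≤ n) (h1 : 1 ∈ D)
    (h2 : 2 ∈ D) (hc2 : c 2 = 2) (hz : 0 < z) (hzM : z ≤ r (n + 2))
    (hmod : z ≡ r (n + 2) [MOD 2]) : z ∈ D := by
  obtain ⟨u, hu, huz, hzu⟩ := h.exists_le_modEq hn h1 h2 hc2 hz
  have hb_odd := h.rep_three_mod_two hn h1 h2 hc2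
  have hx := h.rep_add_two_modEq hn h1 h2 hc2 (h.rep_three_add_rep_sub_one_mem (by omega))
    (by omega)
  refine mem_of_modEq_of_forall_add_mem hu (fun w hw _ hwM hwu => ?_) huz hzM hzu
  refine (h.add_mem_iff_of_class_eq_two hn h1 h2 hc2 hw).2 ⟨?_, hwM.ne⟩
  rintro rfl
  unfold Nat.ModEq at *
  omega

theorem five_lt_rep_sub_one_of_class_two (h : IsLabelClassification n D c r) (hn : 12 ≤ n)
    (h1 : 1 ∈ D) (h2 : 2 ∈ D) (hc2 : c 2 = 2) : 5 < r (n - 1) := by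
  by_contra! hx5
  have h3 : 3 ∈ Sn n := mem_Sn.2 (by omega)
  have hM := h.le_rep_add_two_self
  have hb_odd := h.rep_three_mod_two hn h1 h2 hc2
  have hb_le := h.le_three_of_class_eq_three hn h1 (h.rep_mem 3 h3) (h.class_rep 3 h3)
  -- Adding the odd label `r 3` changes the parity, and all labels above `r (n - 1)` have that of
  -- `r (n + 2)`; this makes `r 3` nonadjacent to four labels, one too many.
  have hterm : ∀ i ≤ 3, r (n + 2) - 2 * i = r (n - 2) ∨ r (n + 2) - 2 * i = r n ∨
      r (n + 2) - 2 * i = r (n + 2) := fun i hi => by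
    have hmem : r (n + 2) - 2 * i ∈ D := h.mem_of_modEq_rep_add_two hn h1 h2 hc2
      (by omega) (by omega) (by unfold Nat.ModEq; omega)
    have hnot : r (n + 2) - 2 * i + r 3 ∉ D := fun hadd => by
      have := h.rep_add_two_modEq hn h1 h2 hc2 hadd (by omega)
      unfold Nat.ModEq at this
      omega
    have := h.add_mem_iff_of_class_eq_three_of_ne (by omega) (h.rep_mem 3 h3) (h.class_rep 3 h3)
      hmem (by omega)
    tauto
  have := hterm 1 (by omega)
  have := hterm 2 (by omega)
  have := hterm 3 (by omega)
  omega

theorem three_add_lt_rep_sub_one (h : IsLabelClassification n D c r) (hn : 12 ≤ n) (h1 : 1 ∈ D)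
    (ha : a ∈ D) (hca : c a = 2) : 3 + a < r (n - 1) := by
  rcases h.eq_one_or_eq_two hn h1 ha hca with rfl | rfl
  · exact h.four_lt_rep_sub_one_of_class_one hn h1 hca
  · exact h.five_lt_rep_sub_one_of_class_two hn h1 ha hca

theorem rep_add_two_le (h : IsLabelClassification n D c r) (hn : 12 ≤ n) (h1 : 1 ∈ D)
    (ha : a ∈ D) (hca : c a = 2) : r (n + 2) ≤ r (n - 1) + 3 := by
  by_contra! hM
  have hx := h.three_add_lt_rep_sub_one hn h1 ha hca
  have ha0 := h.pos a ha
  have hx3 := h.rep_sub_one_add_three_mem hn h1 ha hca (by omega)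
  have hx3a := (h.add_mem_iff_of_class_eq_two hn h1 ha hca hx3).2 ⟨by omega, by omega⟩
  have h3a : 3 + a ∈ D := h.mem_of_le_rep_sub_one hn h1 ha hca (by omega) hx.le
  have hle := h.le_three_of_add_rep_sub_one_mem hn h1 h3a hx.ne
    (by rwa [show 3 + a + r (n - 1) = r (n - 1) + 3 + a by omega])
  omega

theorem rep_sub_one_lt_rep_self (h : IsLabelClassification n D c r) (hn : 12 ≤ n) (h1 : 1 ∈ D)
    (ha : a ∈ D) (hca : c a = 2) : r (n - 1) < r n := by
  have hx : n - 1 ∈ Sn n := mem_Sn.2 (by omega)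
  have hp : n ∈ Sn n := mem_Sn.2 (by omega)
  have hM := h.rep_mem (n + 2) (mem_Sn.2 (by omega))
  have hcp := h.class_rep n hp
  have hpx := h.rep_ne_of_class_ne hx (by omega : c (r n) ≠ n - 1)
  have hxM := h.rep_sub_one_lt_rep_add_two (by omega)
  have hMx := h.rep_add_two_le hn h1 ha hca
  have hM12 := h.le_rep_add_two_self
  by_contra! hlt
  have hnot : ∀ z, 0 < z → z ≤ r (n - 1) → z ≠ r n → z ≠ a → z + r n ∉ D :=
    fun z hz hzx hzp hza hmem => hza <|
      h.eq_of_add_rep_self_mem hn h1 ha hca (h.mem_of_le_rep_sub_one hn h1 ha hca hz hzx) hzp hmem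
  have hsmall : ∀ z, 0 < z → z + r n ≤ r (n - 1) → z = r n ∨ z = a := fun z hz hzx => by
    by_contra! hz'
    exact hnot z hz (by omega) hz'.1 hz'.2
      (h.mem_of_le_rep_sub_one hn h1 ha hca (by omega) hzx)
  have hp_and_a : r n = r (n - 1) - 1 ∧ a = 1 := by
    have := hsmall 1
    have := hsmall 2
    have := hsmall 3
    omega
  refine hnot (r (n + 2) - r n) (by omega) (by omega) (by omega) (by omega) ?_
  rwa [Nat.sub_add_cancel (by omega)]

theorem rep_self_add_eq_and_rep_add_two_eq (h : IsLabelClassification n D c r) (hn : 12 ≤ n)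
    (h1 : 1 ∈ D) (ha : a ∈ D) (hca : c a = 2) :
    r n + a = r (n - 1) + 3 ∧ r (n + 2) = r (n - 1) + 3 := by
  have hp : n ∈ Sn n := mem_Sn.2 (by omega)
  have hcp := h.class_rep n hp
  have hxp := h.rep_sub_one_lt_rep_self hn h1 ha hca
  have hpM := h.rep_ne_of_class_ne (k := n + 2) (mem_Sn.2 (by omega)) (by omega : c (r n) ≠ n + 2)
  have hpa := (h.add_mem_iff_of_class_eq_two hn h1 ha hca (h.rep_mem n hp)).2 ⟨hxp.ne', hpM⟩
  have hpaM := h.le_rep_add_two hpa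
  have hMx := h.rep_add_two_le hn h1 ha hca
  have hp_ne : r n ≠ r (n - 1) + a := fun heq =>
    h.rep_sub_one_add_notMem hn h1 ha hca (heq ▸ h.rep_mem n hp)
  rcases h.eq_one_or_eq_two hn h1 ha hca with rfl | rfl <;> omega

theorem rep_sub_two_add_notMem (h : IsLabelClassification n D c r) (hn : 12 ≤ n) (h1 : 1 ∈ D)
    (ha : a ∈ D) (hca : c a = 2) (hz : 0 < z) (hzx : z < r (n - 1)) (hmem : z + r (n - 1) ∈ D) :
    r (n - 2) + z ∉ D := by
  have hq : n - 2 ∈ Sn n := mem_Sn.2 (by omega)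
  have hzD := h.mem_of_le_rep_sub_one hn h1 ha hca hz hzx.le
  have hcz := (h.add_rep_sub_one_mem_iff (by omega) hzD hzx.ne).1 hmem
  have hqz := h.rep_ne_of_class_ne hq (by omega : c z ≠ n - 2)
  exact fun hadd => ((h.add_mem_iff_of_class_eq_three_of_ne (by omega) hzD hcz (h.rep_mem _ hq)
    hqz.symm).1 hadd).1 rfl

theorem one_notMem (h : IsLabelClassification n D c r) (hn : 12 ≤ n) : 1 ∉ D := by
  intro h1
  have h2 : 2 ∈ Sn n := mem_Sn.2 (by omega)
  have hq : n - 2 ∈ Sn n := mem_Sn.2 (by omega)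
  have hqD := h.rep_mem _ hq
  have hcq := h.class_rep _ hq
  obtain ⟨a, ha, hca⟩ : ∃ a ∈ D, c a = 2 := ⟨r 2, h.rep_mem 2 h2, h.class_rep 2 h2⟩
  have ha12 := h.eq_one_or_eq_two hn h1 ha hca
  have hx := h.three_add_lt_rep_sub_one hn h1 ha hca
  have hpD := h.rep_mem n (mem_Sn.2 (by omega))
  have hMD := h.rep_mem (n + 2) (mem_Sn.2 (by omega))
  obtain ⟨hp, hM⟩ := h.rep_self_add_eq_and_rep_add_two_eq hn h1 ha hca
  have hq3 : r (n - 2) + 3 ∉ D := h.rep_sub_two_add_notMem hn h1 ha hca (by omega) (by omega)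
    (by rwa [add_comm, ← hM])
  have hq3a : r (n - 2) + (3 - a) ∉ D := h.rep_sub_two_add_notMem hn h1 ha hca (by omega)
    (by omega) (by rwa [show 3 - a + r (n - 1) = r n by omega])
  have hqx : r (n - 2) < r (n - 1) := by
    have := h.le_rep_add_two hqD
    have := h.rep_ne_of_class_ne (k := n - 1) (mem_Sn.2 (by omega)) (by omega : c (r (n - 2)) ≠ _)
    have := h.rep_ne_of_class_ne (k := n) (mem_Sn.2 (by omega)) (by omega : c (r (n - 2)) ≠ _)
    have := h.rep_ne_of_class_ne (k := n + 2) (mem_Sn.2 (by omega)) (by omega : c (r (n - 2)) ≠ _)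
    have : r (n - 2) ≠ r (n - 1) + a := fun heq =>
      h.rep_sub_one_add_notMem hn h1 ha hca (heq ▸ hqD)
    omega
  by_cases hlow : r (n - 2) + (3 - a) ≤ r (n - 1)
  · exact hq3a (h.mem_of_le_rep_sub_one hn h1 ha hca (by omega) hlow)
  · exact hq3 (by rwa [show r (n - 2) + 3 = r n by omega])

end IsLabelClassification

section Labeling

variable {n : ℕ} {m : ℕ → ℕ} {ℓ : ℕ × ℕ → ℕ} {u v : ℕ × ℕ}

theorem Admissible.mk_zero_mem_Vnm (hm : Admissible n m) {k : ℕ} (hk : k ∈ Sn n) :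
    (k, 0) ∈ Vnm n m := by
  refine ⟨hk, ?_⟩
  by_cases h2 : 2 * k ∈ Sn n
  · exact two_pos.trans_le (hm.1 k hk h2)
  · simp [hm.2.1 k hk h2]

theorem Admissible.eq_of_fst_eq (hm : Admissible n m) (hu : u ∈ Vnm n m) (hv : v ∈ Vnm n m)
    (huv : u.1 = v.1) (h2 : 2 * u.1 ∉ Sn n) : u = v := by
  have hu2 := hu.2
  have hv2 := hv.2
  rw [← huv] at hv2
  rw [hm.2.1 u.1 hu.1 h2] at hu2 hv2
  exact Prod.ext huv (by omega)

theorem Admissible.exists_mem_Vnm_ne (hm : Admissible n m) {k : ℕ} (hk : k ∈ Sn n)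
    (huk : u.1 + k ∈ Sn n) : ∃ w ∈ Vnm n m, w.1 = k ∧ u ≠ w := by
  by_cases hu : u = (k, 0)
  · subst hu
    exact ⟨(k, 1), ⟨hk, hm.1 k hk (two_mul k ▸ huk)⟩, rfl, by simp⟩
  · exact ⟨(k, 0), hm.mk_zero_mem_Vnm hk, rfl, hu⟩

theorem finite_Vnm : (Vnm n m).Finite := by
  refine ((Set.finite_Iic (n + 2)).biUnion fun k _ =>
    (Set.finite_singleton k).prod (Set.finite_Iio (m k))).subset fun w hw => ?_
  have hw1 := mem_Sn.1 hw.1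
  simp only [Set.mem_iUnion]
  exact ⟨w.1, Set.mem_Iic.2 (by omega), rfl, hw.2⟩

theorem IsSumLabelingG.add_mem_image_iff (hl : IsSumLabelingG n m ℓ) (hu : u ∈ Vnm n m)
    (hv : v ∈ Vnm n m) (huv : u ≠ v) : ℓ u + ℓ v ∈ ℓ '' Vnm n m ↔ u.1 + v.1 ∈ Sn n := by
  have hadj := hl.2 u hu v hv huv
  rw [AdjG, and_iff_right huv] at hadj
  simp only [hadj, Set.mem_image, eq_comm]

theorem IsSumLabelingG.fst_eq_of_eq (hl : IsSumLabelingG n m ℓ) (hn : 5 ≤ n) (hm : Admissible n m)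
    (hu : u ∈ Vnm n m) (hv : v ∈ Vnm n m) (huv : ℓ u = ℓ v) : u.1 = v.1 := by
  wlog hlt : u.1 < v.1 generalizing u v
  · by_contra hne
    exact hne (this hv hu huv.symm (by omega)).symm
  exfalso
  have hneighbor : ∀ k ∈ Sn n, u.1 + k ∈ Sn n → v.1 + k ∈ Sn n ∨ v.1 = k := by
    intro k hk huk
    obtain ⟨w, hw, rfl, huw⟩ := hm.exists_mem_Vnm_ne hk huk
    refine or_iff_not_imp_right.2 fun hvw => ?_
    rw [← hl.add_mem_image_iff hv hw (ne_of_apply_ne Prod.fst hvw), ← huv]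
    exact (hl.add_mem_image_iff hu hw huw).2 huk
  -- Some class completing `u.1` to `n + 2`, `n` or `n - 1` is adjacent to `u` but not to `v`.
  have hsum_add_two := hneighbor (n + 2 - u.1)
  have hsum := hneighbor (n - u.1)
  have hsum_sub_one := hneighbor (n - u.1 - 1)
  have hu1 := hu.1
  have hv1 := hv.1
  simp only [mem_Sn] at *
  omega

theorem IsSumLabelingG.exists_isLabelClassification (hl : IsSumLabelingG n m ℓ) (hn : 5 ≤ n)
    (hm : Admissible n m) :
    ∃ (D : Finset ℕ) (c : ℕ → ℕ), D = ℓ '' Vnm n m ∧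
      IsLabelClassification n D c fun k => ℓ (k, 0) := by
  let D := (finite_Vnm.image ℓ : (ℓ '' Vnm n m).Finite).toFinset
  have hD : ∀ z, z ∈ D ↔ z ∈ ℓ '' Vnm n m := fun z => Set.Finite.mem_toFinset _
  let c : ℕ → ℕ := fun z => (Function.invFunOn ℓ (Vnm n m) z).1
  have hc {v : ℕ × ℕ} (hv : v ∈ Vnm n m) : c (ℓ v) = v.1 :=
    hl.fst_eq_of_eq hn hm (Function.invFunOn_mem ⟨v, hv, rfl⟩) hv
      (Function.invFunOn_eq ⟨v, hv, rfl⟩)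
  refine ⟨D, c, Set.Finite.coe_toFinset _, ?_⟩
  constructor
  case class_rep => exact fun k hk => hc (hm.mk_zero_mem_Vnm hk)
  all_goals simp only [hD, Set.forall_mem_image]
  case pos => exact hl.1
  case class_mem =>
    intro v hv
    exact hc hv ▸ hv.1
  case rep_mem => exact fun k hk => Set.mem_image_of_mem ℓ (hm.mk_zero_mem_Vnm hk)
  case eq_of_class_eq =>
    intro u hu v hv
    rw [hc hu, hc hv]
    exact fun huv h2 => congrArg ℓ (hm.eq_of_fst_eq hu hv huv h2)
  case add_mem_iff =>
    intro u hu v hv huv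
    rw [hc hu, hc hv]
    exact hl.add_mem_image_iff hu hv (ne_of_apply_ne ℓ huv)
  case exists_add_mem =>
    intro u hu k hk huk
    rw [hc hu] at huk
    obtain ⟨w, hw, rfl, huw⟩ := hm.exists_mem_Vnm_ne hk huk
    exact ⟨ℓ w, Set.mem_image_of_mem ℓ hw, hc hw, (hl.add_mem_image_iff hu hw huw).2 huk⟩

end Labeling

theorem no_minimal_labeling_CAn_general (n : ℕ) (hn : 12 ≤ n) (m : ℕ → ℕ) (hm : Admissible n m) :
    ¬ ∃ ℓ : ℕ × ℕ → ℕ, IsSumLabelingG n m ℓ ∧ ∃ u ∈ Vnm n m, ℓ u = 1 := by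
  rintro ⟨ℓ, hl, hone⟩
  obtain ⟨D, c, hD, h⟩ := hl.exists_isLabelClassification (by omega) hm
  have h1 : 1 ∈ (D : Set ℕ) := hD ▸ hone
  exact h.one_notMem hn h1

/-- For every `n ≥ 39` and every admissible multiplicity function `m`, the
graph `G(n,m) ∈ 𝒞(A_n)` admits no minimal sum labeling. -/
theorem no_minimal_labeling_CAn (n : ℕ) (hn : 39 ≤ n) (m : ℕ → ℕ)
    (hm : Admissible n m) :
    ¬ ∃ ℓ : ℕ × ℕ → ℕ, IsSumLabelingG n m ℓ ∧ ∃ u ∈ Vnm n m, ℓ u = 1 :=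
  no_minimal_labeling_CAn_general n (by omega) m hm
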